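/- Let t ≤ m be positive integers, F = GaloisField 2 m, T = GaloisField 2 t. Let ⋆ be a left pre-quasifield operation on F, τ : F → T a surjective 𝔽₂-linear map, σ : F → F a bijection, and h : F → T arbitrary. Then f : F × F → T defined by f(x,y) = τ(σ(y) ⋆ x) + h(y) is a (2m,t)-bent function. -/

import Mathlib

noncomputable instance (n : ℕ) : Fintype (GaloisField 2 n) := Fintype.ofFinite _

/-- The sign character of `ZMod 2`: `chi 0 = 1`, `chi 1 = -1`. -/
def chi (x : ZMod 2) : ℤ := if x = 0 then 1 else -1

lemma chi_add (x y : ZMod 2) : chi (x + y) = chi x * chi y := by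
  revert x y; decide

lemma chi_sq (x : ZMod 2) : chi x ^ 2 = 1 := by
  revert x; decide

/-- Orthogonality: the sign character of a linear functional sums to zero unless the functional
vanishes. -/
lemma sum_chi_dual {V : Type*} [AddCommGroup V] [Module (ZMod 2) V] [Fintype V]
    (φ : Module.Dual (ZMod 2) V) [Decidable (φ = 0)] :
    ∑ x, chi (φ x) = if φ = 0 then (Fintype.card V : ℤ) else 0 := by
  split_ifs with hφ
  · simp [hφ, chi]
  · obtain ⟨v, hv⟩ : ∃ v, φ v ≠ 0 := by
      by_contra! hall
      exact hφ (LinearMap.ext hall)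
    have hshift : ∑ x, chi (φ (x + v)) = ∑ x, chi (φ x) :=
      Equiv.sum_comp (Equiv.addRight v) fun x => chi (φ x)
    have hneg : chi (φ v) = -1 := by simp [chi, hv]
    simp only [map_add, chi_add, hneg, ← Finset.sum_mul] at hshift
    linarith

lemma card_dual {V : Type*} [AddCommGroup V] [Module (ZMod 2) V] [Finite V] :
    Nat.card (Module.Dual (ZMod 2) V) = Nat.card V :=
  Nat.card_congr (Module.finBasis (ZMod 2) V).toDualEquiv.toEquiv.symm

/-- If the differences of distinct members of a family of endomorphisms indexed by a finite space
are injective, then composing a nonzero functional with the family yields each functional exactly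
once. -/
lemma bijective_dual_comp {V : Type*} [AddCommGroup V] [Module (ZMod 2) V] [Finite V]
    (ψ : Module.Dual (ZMod 2) V) (hψ : ψ ≠ 0) (L : V → V →ₗ[ZMod 2] V)
    (hL : ∀ c d x, x ≠ 0 → L c x = L d x → c = d) :
    Function.Bijective fun c => ψ ∘ₗ L c := by
  have : Finite (Module.Dual (ZMod 2) V) :=
    Finite.of_equiv V (Module.finBasis (ZMod 2) V).toDualEquiv.toEquiv
  refine Function.Injective.bijective_of_nat_card_le (fun c d hcd => ?_) card_dual.le
  by_contra hne
  have hinj : Function.Injective (L c - L d) := by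
    rw [injective_iff_map_eq_zero]
    intro x hx
    by_contra hx0
    exact hne (hL c d x hx0 (sub_eq_zero.mp hx))
  have hsurj := Finite.surjective_of_injective hinj
  refine hψ (LinearMap.ext fun y => ?_)
  obtain ⟨x, rfl⟩ := hsurj y
  have := LinearMap.congr_fun hcd x
  simpa [sub_eq_zero] using this

/-- A Maiorana–McFarland type sum has absolute value `|V|`. -/
lemma sum_chi_sq {V : Type*} [AddCommGroup V] [Module (ZMod 2) V] [Fintype V]
    (M : V → Module.Dual (ZMod 2) V) (hM : Function.Bijective M) (α : Module.Dual (ZMod 2) V)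
    (g : V → ZMod 2) :
    (∑ p : V × V, chi (M p.2 p.1 + α p.1 + g p.2)) ^ 2 = (Fintype.card V : ℤ) ^ 2 := by
  classical
  obtain ⟨y₀, hy₀⟩ := hM.2 (-α)
  have hzero : ∀ y, M y + α = 0 ↔ y = y₀ := fun y => by
    rw [← eq_neg_iff_add_eq_zero, ← hy₀, hM.1.eq_iff]
  have hinner : ∀ y, ∑ x, chi (M y x + α x + g y) =
      if y = y₀ then (Fintype.card V : ℤ) * chi (g y) else 0 := fun y => by
    simp only [chi_add _ (g y), ← Finset.sum_mul, ← LinearMap.add_apply, sum_chi_dual, hzero,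
      ite_mul, zero_mul]
  rw [Fintype.sum_prod_type_right]
  simp only [hinner, Finset.sum_ite_eq', Finset.mem_univ, if_true]
  rw [mul_pow, chi_sq, mul_one]

theorem quasifield_type_is_bent
    (m t : ℕ) (hm : 0 < m) (ht : 0 < t) (htm : t ≤ m)
    (star : GaloisField 2 m → GaloisField 2 m → GaloisField 2 m)
    (hz1 : ∀ x, star x 0 = 0) (hz2 : ∀ x, star 0 x = 0)
    (hdist : ∀ x y z, star x (y + z) = star x y + star x z)
    (hbij1 : ∀ a, a ≠ 0 → Function.Bijective fun x => star x a)
    (hbij2 : ∀ a, a ≠ 0 → Function.Bijective fun x => star a x)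
    (τ : GaloisField 2 m →ₗ[ZMod 2] GaloisField 2 t) (hτ : Function.Surjective τ)
    (σ : GaloisField 2 m → GaloisField 2 m) (hσ : Function.Bijective σ)
    (h : GaloisField 2 m → GaloisField 2 t) :
    ∀ u : GaloisField 2 t, u ≠ 0 → ∀ a b : GaloisField 2 m,
      (∑ p : GaloisField 2 m × GaloisField 2 m,
          chi (Algebra.trace (ZMod 2) (GaloisField 2 t) (u * (τ (star (σ p.2) p.1) + h p.2)) +
               Algebra.trace (ZMod 2) (GaloisField 2 m) (a * p.1) +
               Algebra.trace (ZMod 2) (GaloisField 2 m) (b * p.2))) ^ 2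
        = 2 ^ (2 * m) := by
  intro u hu a b
  let ψ : Module.Dual (ZMod 2) (GaloisField 2 m) :=
    Algebra.trace (ZMod 2) (GaloisField 2 t) ∘ₗ LinearMap.mulLeft (ZMod 2) u ∘ₗ τ
  let L : GaloisField 2 m → GaloisField 2 m →ₗ[ZMod 2] GaloisField 2 m := fun c =>
    (AddMonoidHom.mk' (star c) (hdist c)).toZModLinearMap 2
  have hψ : ψ ≠ 0 := by
    intro h0
    obtain ⟨z, hz⟩ := Algebra.trace_surjective (ZMod 2) (GaloisField 2 t) 1
    obtain ⟨w, hw⟩ := hτ (u⁻¹ * z)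
    have hψw : Algebra.trace (ZMod 2) (GaloisField 2 t) (u * τ w) = 0 :=
      LinearMap.congr_fun h0 w
    rw [hw, mul_inv_cancel_left₀ hu, hz] at hψw
    exact one_ne_zero hψw
  have hM := (bijective_dual_comp ψ hψ L fun c d x hx hcd => (hbij1 x hx).1 hcd).comp hσ
  have hsum := sum_chi_sq _ hM
    (Algebra.trace (ZMod 2) (GaloisField 2 m) ∘ₗ LinearMap.mulLeft (ZMod 2) a)
    (fun y => Algebra.trace (ZMod 2) (GaloisField 2 t) (u * h y) +
      Algebra.trace (ZMod 2) (GaloisField 2 m) (b * y))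
  have hcard : Fintype.card (GaloisField 2 m) = 2 ^ m := by
    rw [← Nat.card_eq_fintype_card, GaloisField.card 2 m hm.ne']
  rw [hcard, Nat.cast_pow, Nat.cast_ofNat, ← pow_mul, mul_comm m 2] at hsum
  rw [← hsum]
  congr 1
  refine Finset.sum_congr rfl fun p _ => congrArg chi ?_
  change _ = Algebra.trace (ZMod 2) (GaloisField 2 t) (u * τ (star (σ p.2) p.1)) +
    Algebra.trace (ZMod 2) (GaloisField 2 m) (a * p.1) + _
  rw [mul_add, map_add]
  ring
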